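/- Let k be a field of characteristic 0, let a ∈ k be a non-square, and let K/k be a finite field extension such that a is not a square in K. Let F = K(α) with α² = a and L = k(α) ⊆ F, and let σ be the unique nontrivial K-algebra automorphism of F. Let ρ ∈ L be nonzero. For every commutative k-algebra B, write N₁ : (F ⊗_k B)^× → (L ⊗_k B)^× for the algebra norm of F ⊗_k B over L ⊗_k B and N₂ : (F ⊗_k B)^× → B^× for the algebra norm of F ⊗_k B over B, and let σ_B = σ ⊗ id_B act on F ⊗_k B. Then the map (t, w, y) ↦ ((t, (w·σ_B(w))⁻¹·y), w) is a bijection from the set {(t, w, y) ∈ B × (F ⊗_k B)^× × (F ⊗_k B)^× : N₂(w)·((1⊗t) − (α⊗1)) = (ρ⊗1)·N₁(y) in L ⊗_k B} onto the set {(t, x) ∈ B × (F ⊗_k B)^× : (1⊗t) − (α⊗1) = (ρ⊗1)·N₁(x) in L ⊗_k B} × (F ⊗_k B)^×, with inverse ((t, x), y) ↦ (t, y, x·y·σ_B(y)). (The isomorphism Y' ≅ T_U × R_{F/k}(G_m) in the non-split case of the proof of Proposition 4.1.) -/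

import Mathlib

open IntermediateField TensorProduct

attribute [local instance] Algebra.TensorProduct.rightAlgebra

/-- The algebra norm of `F ⊗_k B` over `L ⊗_k B`, for an intermediate field
`L` of `F/k` and a commutative `k`-algebra `B`; the `(L ⊗_k B)`-algebra structure
on `F ⊗_k B` is induced by the inclusion `L → F`. -/
noncomputable def normTensor (k F : Type) [Field k] [Field F] [Algebra k F]
    (L : IntermediateField k F) (B : Type) [CommRing B] [Algebra k B] :
    (F ⊗[k] B) →* (↥L ⊗[k] B) :=
  @Algebra.norm (↥L ⊗[k] B) (F ⊗[k] B) _ _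
    ((Algebra.TensorProduct.map L.val (AlgHom.id k B)).toRingHom).toAlgebra

/-!
Let `L = k(α)`, write `τ` for the restriction of `σ` to `L`, and base-change `σ` and `τ` to `B`.
On the quadratic algebra `L ⊗ B` over `B` the norm is `z ↦ z * τ z`, and `N₁ ∘ σ = τ ∘ N₁`. Hence
transitivity of norms gives `N₁ (w * σ w) = N₁ w * τ (N₁ w) = N_{L ⊗ B / B} (N₁ w) = N₂ w`, so that
dividing `y` by `w * σ w` absorbs the factor `N₂ w` of the equation.
-/

section Norm

variable {R S : Type*} [CommRing R] [CommRing S] [Algebra R S]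

theorem algebraMap_norm_eq_mul_of_basis (b : Module.Basis (Fin 2) R S) (hb : b 0 = 1)
    (τ : S →ₐ[R] S) (htr : b 1 + τ (b 1) ∈ (algebraMap R S).range)
    (hnm : b 1 * τ (b 1) ∈ (algebraMap R S).range) (z : S) :
    algebraMap R S (Algebra.norm R z) = z * τ z := by
  obtain ⟨p, hp⟩ := htr
  obtain ⟨q, hq⟩ := hnm
  obtain ⟨x, y, hz⟩ : ∃ x y : R, z = x • b 0 + y • b 1 :=
    ⟨b.repr z 0, b.repr z 1, by rw [← Fin.sum_univ_two (fun i => b.repr z i • b i), b.sum_repr]⟩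
  have mul_zero_eq : z * b 0 = x • b 0 + y • b 1 := by rw [hb, mul_one, hz, hb]
  have mul_one_eq : z * b 1 = (-(y * q)) • b 0 + (x + y * p) • b 1 := by
    rw [hz, hb]
    simp only [Algebra.smul_def, map_mul, map_add, map_neg, hp, hq]
    ring
  have norm_eq : Algebra.norm R z = x * (x + y * p) + y * q * y := by
    rw [Algebra.norm_eq_matrix_det b, Matrix.det_fin_two]
    simp [Algebra.leftMulMatrix_eq_repr_mul, mul_zero_eq, mul_one_eq]
  rw [norm_eq, hz, hb]
  simp only [Algebra.smul_def, map_mul, map_add, map_one, AlgHom.commutes, hp, hq]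
  ring

theorem norm_mul_apply_eq_algebraMap_norm {A : Type*} [CommRing A] [Algebra S A] [Algebra R A]
    [IsScalarTower R S A] [Module.Free R S] [Module.Free S A] (τ : S ≃+* S) (σ : A ≃+* A)
    (hσ : ∀ s, algebraMap S A (τ s) = σ (algebraMap S A s))
    (hτ : ∀ z, algebraMap R S (Algebra.norm R z) = z * τ z) (w : A) :
    Algebra.norm S (w * σ w) = algebraMap R S (Algebra.norm R w) := by
  have norm_apply : Algebra.norm S (σ w) = τ (Algebra.norm S w) := by
    rw [Algebra.norm_eq_of_equiv_equiv τ σ (RingHom.ext hσ) w, τ.apply_symm_apply]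
  rw [map_mul, norm_apply, ← hτ, Algebra.norm_norm]

end Norm

section TensorProduct

variable {k L F B : Type*} [CommRing k] [CommRing L] [CommRing F] [CommRing B]
  [Algebra k L] [Algebra k F] [Algebra k B]

theorem algebraMap_norm_tensorProduct_eq_mul (b : Module.Basis (Fin 2) k L) (hb : b 0 = 1)
    (τ : L ≃ₐ[k] L) (htr : b 1 + τ (b 1) ∈ (algebraMap k L).range)
    (hnm : b 1 * τ (b 1) ∈ (algebraMap k L).range) (z : L ⊗[k] B) :
    algebraMap B (L ⊗[k] B) (Algebra.norm B z) =
      z * Algebra.TensorProduct.congr τ (AlgEquiv.refl (A₁ := B)) z := by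
  let bB : Module.Basis (Fin 2) B (L ⊗[k] B) :=
    (Algebra.IsPushout.out (R := k) (S := B) (R' := L) (S' := L ⊗[k] B)).basis b
  have bB_apply (i : Fin 2) : bB i = b i ⊗ₜ 1 := IsBaseChange.basis_apply ..
  let τB : L ⊗[k] B →ₐ[B] L ⊗[k] B :=
    { (Algebra.TensorProduct.congr τ (AlgEquiv.refl (A₁ := B))).toRingEquiv.toRingHom with
      commutes' := fun r => by simp [Algebra.TensorProduct.right_algebraMap_apply] }
  have τB_apply (l : L) : τB (l ⊗ₜ 1) = τ l ⊗ₜ 1 := by simp [τB]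
  have mem_range {l : L} (hl : l ∈ (algebraMap k L).range) :
      l ⊗ₜ[k] (1 : B) ∈ (algebraMap B (L ⊗[k] B)).range := by
    obtain ⟨c, rfl⟩ := hl
    exact ⟨algebraMap k B c, (Algebra.TensorProduct.tmul_one_eq_one_tmul c).symm⟩
  refine algebraMap_norm_eq_mul_of_basis bB ?_ τB ?_ ?_ z
  · rw [bB_apply, hb, Algebra.TensorProduct.one_def]
  · rw [bB_apply, τB_apply, ← TensorProduct.add_tmul]
    exact mem_range htr
  · rw [bB_apply, τB_apply, Algebra.TensorProduct.tmul_mul_tmul, mul_one]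
    exact mem_range hnm

variable [Algebra L F] [Algebra (L ⊗[k] B) (F ⊗[k] B)]

theorem isScalarTower_tensorProduct_right (halg : ∀ (l : L) (b : B),
      algebraMap (L ⊗[k] B) (F ⊗[k] B) (l ⊗ₜ b) = algebraMap L F l ⊗ₜ b) :
    IsScalarTower B (L ⊗[k] B) (F ⊗[k] B) :=
  .of_algebraMap_eq fun b => by simp [Algebra.TensorProduct.right_algebraMap_apply, halg]

variable [IsScalarTower k L F]

theorem free_tensorProduct_tensorProduct [Module.Free L F] (halg : ∀ (l : L) (b : B),
      algebraMap (L ⊗[k] B) (F ⊗[k] B) (l ⊗ₜ b) = algebraMap L F l ⊗ₜ b) :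
    Module.Free (L ⊗[k] B) (F ⊗[k] B) := by
  have : IsScalarTower B (L ⊗[k] B) (F ⊗[k] B) := isScalarTower_tensorProduct_right halg
  have : IsScalarTower L (L ⊗[k] B) (F ⊗[k] B) := .of_algebraMap_eq fun l => by simp [halg]
  have : IsScalarTower k (L ⊗[k] B) (F ⊗[k] B) := .to₁₃₄ k B _ _
  -- Cancelling the pushout square of `k → L` and `k → B` from that of `k → F` and `k → B`.
  have isPushout : Algebra.IsPushout L F (L ⊗[k] B) (F ⊗[k] B) :=
    (Algebra.IsPushout.comp_iff (R := k) (R' := B) ..).mp inferInstance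
  exact isPushout.symm.out.free

theorem norm_tensorProduct_mul_apply [Module.Free L F] (halg : ∀ (l : L) (b : B),
      algebraMap (L ⊗[k] B) (F ⊗[k] B) (l ⊗ₜ b) = algebraMap L F l ⊗ₜ b)
    (b : Module.Basis (Fin 2) k L) (hb : b 0 = 1) (τ : L ≃ₐ[k] L)
    (htr : b 1 + τ (b 1) ∈ (algebraMap k L).range) (hnm : b 1 * τ (b 1) ∈ (algebraMap k L).range)
    (σ : F ≃ₐ[k] F) (hσ : ∀ l, algebraMap L F (τ l) = σ (algebraMap L F l)) (w : F ⊗[k] B) :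
    Algebra.norm (L ⊗[k] B) (w * Algebra.TensorProduct.congr σ (AlgEquiv.refl (A₁ := B)) w) =
      1 ⊗ₜ Algebra.norm B w := by
  have : Module.Free k L := .of_basis b
  have : Module.Free B (L ⊗[k] B) := (Algebra.IsPushout.out (R := k) (R' := L)).free
  have : Module.Free (L ⊗[k] B) (F ⊗[k] B) := free_tensorProduct_tensorProduct halg
  have : IsScalarTower B (L ⊗[k] B) (F ⊗[k] B) := isScalarTower_tensorProduct_right halg
  refine norm_mul_apply_eq_algebraMap_norm (R := B)
    (Algebra.TensorProduct.congr τ (AlgEquiv.refl (A₁ := B))).toRingEquiv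
    (Algebra.TensorProduct.congr σ (AlgEquiv.refl (A₁ := B))).toRingEquiv (fun s => ?_)
    (algebraMap_norm_tensorProduct_eq_mul b hb τ htr hnm) w
  induction s with
  | zero => simp
  | add s t hs ht => simp only [map_add, hs, ht]
  | tmul l b => simp [halg, hσ]

end TensorProduct

section QuadraticField

variable {k F : Type*} [Field k] [Field F] [Algebra k F] {α : F}

theorem natDegree_minpoly_eq_two_of_quadratic {p q : k} (hα : α ∉ (algebraMap k F).range)
    (h : α ^ 2 - algebraMap k F p * α + algebraMap k F q = 0) : (minpoly k α).natDegree = 2 := by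
  let P : Polynomial k := .X ^ 2 + (.C (-p) * .X + .C q)
  have monic_P : P.Monic := Polynomial.monic_X_pow_add (by compute_degree!)
  have degree_P : P.natDegree = 2 := by unfold P; compute_degree!
  have root_P : Polynomial.aeval α P = 0 := by
    rw [← h]
    simp only [P, map_add, map_mul, map_pow, Polynomial.aeval_X, Polynomial.aeval_C, map_neg]
    ring
  refine le_antisymm ?_ ((minpoly.two_le_natDegree_iff ⟨P, monic_P, root_P⟩).mpr hα)
  exact degree_P ▸ Polynomial.natDegree_le_natDegree (minpoly.min k α monic_P root_P)

theorem exists_basis_adjoin_simple (hα : (minpoly k α).natDegree = 2) :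
    ∃ b : Module.Basis (Fin 2) k k⟮α⟯, b 0 = 1 ∧ b 1 = AdjoinSimple.gen k α := by
  have hint : IsIntegral k α := minpoly.ne_zero_iff.mp fun h => by simp [h] at hα
  have hdim : (adjoin.powerBasis hint).dim = 2 := by rw [adjoin.powerBasis_dim, hα]
  exact ⟨(adjoin.powerBasis hint).basis.reindex (finCongr hdim), by simp, by simp⟩

theorem isQuadraticExtension_adjoin_simple (hα : (minpoly k α).natDegree = 2) :
    Algebra.IsQuadraticExtension k k⟮α⟯ where
  finrank_eq_two' := by
    rw [adjoin.finrank (minpoly.ne_zero_iff.mp fun h => by simp [h] at hα), hα]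

theorem notMem_range_algebraMap_of_sq_eq {a : k} (ha : ¬∃ x : k, x ^ 2 = a)
    (hα : α ^ 2 = algebraMap k F a) : α ∉ (algebraMap k F).range := by
  rintro ⟨x, rfl⟩
  exact ha ⟨x, (algebraMap k F).injective <| by rw [map_pow, hα]⟩

theorem finiteDimensional_of_adjoin_simple_eq_top {K : Type*} [Field K] [Algebra k K] [Algebra K F]
    [IsScalarTower k K F] [FiniteDimensional k K] (hα : IsIntegral k α) (htop : K⟮α⟯ = ⊤) :
    FiniteDimensional k F := by
  have := adjoin.finiteDimensional (hα.tower_top (A := K))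
  rw [htop] at this
  have : FiniteDimensional K F :=
    .of_surjective (topEquiv (F := K) (E := F)).toLinearMap topEquiv.surjective
  exact .trans k K F

end QuadraticField

theorem normTensor_mul_apply {k F : Type} [Field k] [Field F] [Algebra k F] {α : F}
    (hα : α ∉ (algebraMap k F).range) (σ : F ≃ₐ[k] F) (htr : α + σ α ∈ (algebraMap k F).range)
    (hnm : α * σ α ∈ (algebraMap k F).range) (B : Type) [CommRing B] [Algebra k B]
    (w : F ⊗[k] B) :
    normTensor k F k⟮α⟯ B (w * Algebra.TensorProduct.congr σ (AlgEquiv.refl (A₁ := B)) w) =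
      1 ⊗ₜ Algebra.norm B w := by
  have natDegree_eq : (minpoly k α).natDegree = 2 := by
    obtain ⟨p, hp⟩ := htr
    obtain ⟨q, hq⟩ := hnm
    exact natDegree_minpoly_eq_two_of_quadratic hα (p := p) (q := q) (by rw [hp, hq]; ring)
  obtain ⟨b, hb0, hb1⟩ := exists_basis_adjoin_simple natDegree_eq
  have := isQuadraticExtension_adjoin_simple natDegree_eq
  let τ : k⟮α⟯ ≃ₐ[k] k⟮α⟯ := σ.restrictNormal k⟮α⟯
  have hτ (l : k⟮α⟯) : algebraMap k⟮α⟯ F (τ l) = σ (algebraMap k⟮α⟯ F l) :=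
    σ.restrictNormal_commutes k⟮α⟯ l
  have mem_range {l : k⟮α⟯} (hl : (l : F) ∈ (algebraMap k F).range) :
      l ∈ (algebraMap k k⟮α⟯).range := by
    obtain ⟨c, hc⟩ := hl
    exact ⟨c, Subtype.ext hc⟩
  have coe_τ_gen : (τ (AdjoinSimple.gen k α) : F) = σ α := hτ _
  let : Algebra (k⟮α⟯ ⊗[k] B) (F ⊗[k] B) :=
    (Algebra.TensorProduct.map k⟮α⟯.val (AlgHom.id k B)).toRingHom.toAlgebra
  exact norm_tensorProduct_mul_apply (fun _ _ => rfl) b hb0 τ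
    (mem_range <| by simpa [hb1, coe_τ_gen] using htr)
    (mem_range <| by simpa [hb1, coe_τ_gen] using hnm) σ hτ w

theorem bijOn_invOn_of_map_mul_apply {T G M : Type*} [CommGroup G] [CommMonoid M] (N : G →* M)
    (S : G → G) (N' : G → M) (hN : ∀ w, N (w * S w) = N' w) (d : T → M) (r : M) :
    Set.BijOn (fun p : T × G × G => ((p.1, (p.2.1 * S p.2.1)⁻¹ * p.2.2), p.2.1))
      {p | N' p.2.1 * d p.1 = r * N p.2.2} {q | d q.1.1 = r * N q.1.2} ∧
    Set.InvOn (fun q : (T × G) × G => (q.1.1, q.2, q.1.2 * q.2 * S q.2))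
      (fun p : T × G × G => ((p.1, (p.2.1 * S p.2.1)⁻¹ * p.2.2), p.2.1))
      {p | N' p.2.1 * d p.1 = r * N p.2.2} {q | d q.1.1 = r * N q.1.2} := by
  have invOn : Set.InvOn (fun q : (T × G) × G => (q.1.1, q.2, q.1.2 * q.2 * S q.2))
      (fun p : T × G × G => ((p.1, (p.2.1 * S p.2.1)⁻¹ * p.2.2), p.2.1))
      {p | N' p.2.1 * d p.1 = r * N p.2.2} {q | d q.1.1 = r * N q.1.2} :=
    ⟨fun ⟨t, w, y⟩ _ => by simp [mul_right_comm _ _ (S w)],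
      fun ⟨⟨t, x⟩, y⟩ _ => by simp [mul_assoc, mul_comm x]⟩
  refine ⟨invOn.bijOn (fun ⟨t, w, y⟩ h => ?_) (fun ⟨⟨t, x⟩, y⟩ h => ?_), invOn⟩
  · have : N (w * S w) * d t = N (w * S w) * (r * N ((w * S w)⁻¹ * y)) := by
      rw [hN, mul_left_comm, ← hN w, ← map_mul, mul_inv_cancel_left, hN]
      exact h
    exact ((Group.isUnit (w * S w)).map N).mul_left_cancel this
  · have : d t = r * N x := h
    change N' y * d t = r * N (x * y * S y)
    rw [this, mul_assoc x, map_mul, hN, mul_left_comm, mul_comm (N' y)]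

theorem torsor_substitution_nonsplit_case_general
    (k F : Type) [Field k] [Field F] [Algebra k F] [FiniteDimensional k F]
    (α : F) (hα : α ∉ (algebraMap k F).range) (σ : F ≃ₐ[k] F)
    (htr : α + σ α ∈ (algebraMap k F).range) (hnm : α * σ α ∈ (algebraMap k F).range)
    (ρ : k⟮α⟯) (B : Type) [CommRing B] [Algebra k B] :
    Set.BijOn
      (fun p : B × (F ⊗[k] B)ˣ × (F ⊗[k] B)ˣ =>
        ((p.1, (p.2.1 * Units.map
            (Algebra.TensorProduct.congr σ
              (AlgEquiv.refl (A₁ := B))).toAlgHom.toRingHom.toMonoidHom p.2.1)⁻¹ *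
            p.2.2), p.2.1))
      {p : B × (F ⊗[k] B)ˣ × (F ⊗[k] B)ˣ |
        ((1 : k⟮α⟯) ⊗ₜ[k] Algebra.norm B (p.2.1 : F ⊗[k] B)) *
            (((1 : k⟮α⟯) ⊗ₜ[k] p.1) - (AdjoinSimple.gen k α ⊗ₜ[k] (1 : B))) =
          (ρ ⊗ₜ[k] (1 : B)) * normTensor k F k⟮α⟯ B p.2.2}
      {q : (B × (F ⊗[k] B)ˣ) × (F ⊗[k] B)ˣ |
        ((1 : k⟮α⟯) ⊗ₜ[k] q.1.1) - (AdjoinSimple.gen k α ⊗ₜ[k] (1 : B)) =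
          (ρ ⊗ₜ[k] (1 : B)) * normTensor k F k⟮α⟯ B q.1.2} ∧
    Set.InvOn
      (fun q : (B × (F ⊗[k] B)ˣ) × (F ⊗[k] B)ˣ =>
        (q.1.1, q.2, q.1.2 * q.2 * Units.map
          (Algebra.TensorProduct.congr σ
            (AlgEquiv.refl (A₁ := B))).toAlgHom.toRingHom.toMonoidHom q.2))
      (fun p : B × (F ⊗[k] B)ˣ × (F ⊗[k] B)ˣ =>
        ((p.1, (p.2.1 * Units.map
            (Algebra.TensorProduct.congr σ
              (AlgEquiv.refl (A₁ := B))).toAlgHom.toRingHom.toMonoidHom p.2.1)⁻¹ *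
            p.2.2), p.2.1))
      {p : B × (F ⊗[k] B)ˣ × (F ⊗[k] B)ˣ |
        ((1 : k⟮α⟯) ⊗ₜ[k] Algebra.norm B (p.2.1 : F ⊗[k] B)) *
            (((1 : k⟮α⟯) ⊗ₜ[k] p.1) - (AdjoinSimple.gen k α ⊗ₜ[k] (1 : B))) =
          (ρ ⊗ₜ[k] (1 : B)) * normTensor k F k⟮α⟯ B p.2.2}
      {q : (B × (F ⊗[k] B)ˣ) × (F ⊗[k] B)ˣ |
        ((1 : k⟮α⟯) ⊗ₜ[k] q.1.1) - (AdjoinSimple.gen k α ⊗ₜ[k] (1 : B)) =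
          (ρ ⊗ₜ[k] (1 : B)) * normTensor k F k⟮α⟯ B q.1.2} := by
  generalize hS : Units.map (M := F ⊗[k] B) (N := F ⊗[k] B) (Algebra.TensorProduct.congr σ
      (AlgEquiv.refl (A₁ := B))).toAlgHom.toRingHom.toMonoidHom = S
  let N : (F ⊗[k] B)ˣ →* k⟮α⟯ ⊗[k] B := (normTensor k F k⟮α⟯ B).comp (Units.coeHom (F ⊗[k] B))
  have norm_mul_S (w : (F ⊗[k] B)ˣ) : N (w * S w) = 1 ⊗ₜ Algebra.norm B (w : F ⊗[k] B) := by
    subst hS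
    exact normTensor_mul_apply hα σ htr hnm B w
  exact bijOn_invOn_of_map_mul_apply (G := (F ⊗[k] B)ˣ) (M := k⟮α⟯ ⊗[k] B) N S _ norm_mul_S
    (fun t : B => 1 ⊗ₜ t - AdjoinSimple.gen k α ⊗ₜ 1) (ρ ⊗ₜ 1)

/-- The isomorphism `Y' ≅ T_U × R_{F/k}(G_m)` in the non-split case of the proof of
Proposition 4.1 (Derenthal–Smeets–Wei): for every commutative `k`-algebra `B`, the map
`(t, w, y) ↦ ((t, (w·σ(w))⁻¹y), w)` is a bijection from the `B`-points of
`N₂(w)(t − α) = ρ·N₁(y)` onto (the `B`-points of `t − α = ρ·N₁(x)`) × (F ⊗ B)^×,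
with inverse `((t, x), y) ↦ (t, y, x·y·σ(y))`. -/
theorem torsor_substitution_nonsplit_case
    (k K F : Type) [Field k] [CharZero k] [Field K] [Field F]
    [Algebra k K] [Algebra K F] [Algebra k F] [IsScalarTower k K F]
    [FiniteDimensional k K]
    (a : k) (ha : ¬∃ x : k, x ^ 2 = a) (haK : ¬∃ x : K, x ^ 2 = algebraMap k K a)
    (α : F) (hα : α ^ 2 = algebraMap k F a)
    (htop : IntermediateField.adjoin K {α} = ⊤)
    (σ : F ≃ₐ[K] F) (hσ : σ α = -α)
    (ρ : ↥k⟮α⟯) (hρ : ρ ≠ 0)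
    (B : Type) [CommRing B] [Algebra k B] :
    Set.BijOn
      (fun p : B × (F ⊗[k] B)ˣ × (F ⊗[k] B)ˣ =>
        ((p.1, (p.2.1 * Units.map
            (Algebra.TensorProduct.congr (σ.restrictScalars k)
              (AlgEquiv.refl (A₁ := B))).toAlgHom.toRingHom.toMonoidHom p.2.1)⁻¹ *
            p.2.2), p.2.1))
      {p : B × (F ⊗[k] B)ˣ × (F ⊗[k] B)ˣ |
        ((1 : ↥k⟮α⟯) ⊗ₜ[k] Algebra.norm B (↑p.2.1 : F ⊗[k] B)) *
            (((1 : ↥k⟮α⟯) ⊗ₜ[k] p.1) - (AdjoinSimple.gen k α ⊗ₜ[k] (1 : B))) =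
          (ρ ⊗ₜ[k] (1 : B)) * normTensor k F k⟮α⟯ B ↑p.2.2}
      {q : (B × (F ⊗[k] B)ˣ) × (F ⊗[k] B)ˣ |
        ((1 : ↥k⟮α⟯) ⊗ₜ[k] q.1.1) - (AdjoinSimple.gen k α ⊗ₜ[k] (1 : B)) =
          (ρ ⊗ₜ[k] (1 : B)) * normTensor k F k⟮α⟯ B ↑q.1.2} ∧
    Set.InvOn
      (fun q : (B × (F ⊗[k] B)ˣ) × (F ⊗[k] B)ˣ =>
        (q.1.1, q.2, q.1.2 * q.2 * Units.map
          (Algebra.TensorProduct.congr (σ.restrictScalars k)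
            (AlgEquiv.refl (A₁ := B))).toAlgHom.toRingHom.toMonoidHom q.2))
      (fun p : B × (F ⊗[k] B)ˣ × (F ⊗[k] B)ˣ =>
        ((p.1, (p.2.1 * Units.map
            (Algebra.TensorProduct.congr (σ.restrictScalars k)
              (AlgEquiv.refl (A₁ := B))).toAlgHom.toRingHom.toMonoidHom p.2.1)⁻¹ *
            p.2.2), p.2.1))
      {p : B × (F ⊗[k] B)ˣ × (F ⊗[k] B)ˣ |
        ((1 : ↥k⟮α⟯) ⊗ₜ[k] Algebra.norm B (↑p.2.1 : F ⊗[k] B)) *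
            (((1 : ↥k⟮α⟯) ⊗ₜ[k] p.1) - (AdjoinSimple.gen k α ⊗ₜ[k] (1 : B))) =
          (ρ ⊗ₜ[k] (1 : B)) * normTensor k F k⟮α⟯ B ↑p.2.2}
      {q : (B × (F ⊗[k] B)ˣ) × (F ⊗[k] B)ˣ |
        ((1 : ↥k⟮α⟯) ⊗ₜ[k] q.1.1) - (AdjoinSimple.gen k α ⊗ₜ[k] (1 : B)) =
          (ρ ⊗ₜ[k] (1 : B)) * normTensor k F k⟮α⟯ B ↑q.1.2} := by
  have : FiniteDimensional k F :=
    finiteDimensional_of_adjoin_simple_eq_top (.of_pow two_pos (hα ▸ isIntegral_algebraMap)) htop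
  exact torsor_substitution_nonsplit_case_general k F α (notMem_range_algebraMap_of_sq_eq ha hα)
    (σ.restrictScalars k) ⟨0, by simp [hσ]⟩ ⟨-a, by simp [hσ, ← hα, sq]⟩ ρ B
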